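/- arXiv:2110.14438 — 4 statements merged into one kernel-verified Lean document; each statement's English description precedes it below -/
import Mathlib

section
/- Let n be a positive integer and let S = (s₁,…,s_t) be a composition of n. The number of pairs (A, b), where A is an invertible n×n matrix over 𝔽₂ that is block-lower-triangular with structure S and b ∈ 𝔽₂ⁿ, equals 2^{n(n+1)/2} · ∏_{i=1}^{t} ∏_{j=2}^{s_i} (2^j − 1). -/
/-- The (1-indexed) block number of index `k` for the composition `S = (s₁,…,s_t)`:
the unique `i` with `s₁+⋯+s_{i−1} ≤ k < s₁+⋯+s_i`, computed as the number of
prefix sums of `S` (over proper prefixes) that are `≤ k`. -/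
def blk (S : List ℕ) (k : ℕ) : ℕ :=
  ((List.range S.length).filter (fun i => (S.take i).sum ≤ k)).length

/-- `A` is block-lower-triangular with block structure `S`:
`A k l = 0` whenever the block number of `l` exceeds that of `k`. -/
def IsBLT (S : List ℕ) {n : ℕ} (A : Matrix (Fin n) (Fin n) (ZMod 2)) : Prop :=
  ∀ k l : Fin n, blk S (k : ℕ) < blk S (l : ℕ) → A k l = 0

lemma blk_cons_lt (s : ℕ) (T : List ℕ) (k : ℕ) (h : k < s) : blk (s :: T) k = 1 := by
  unfold blk
  rw [List.length_cons, List.range_succ_eq_map, List.filter_cons]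
  simp [List.filter_map, Function.comp_def]
  intro a _
  exact decide_eq_false (by omega)

lemma blk_cons_ge (s : ℕ) (T : List ℕ) (k : ℕ) : blk (s :: T) (s + k) = 1 + blk T k := by
  unfold blk
  rw [List.length_cons, List.range_succ_eq_map, List.filter_cons]
  simp [List.filter_map, Function.comp_def]
  omega

lemma blk_pos (T : List ℕ) (k : ℕ) (h : k < T.sum) : 0 < blk T k := by
  cases T with
  | nil => simp at h
  | cons s T =>
    by_cases hk : k < s
    · rw [blk_cons_lt s T k hk]; norm_num
    · obtain ⟨j, rfl⟩ := Nat.exists_eq_add_of_le (not_lt.mp hk)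
      rw [blk_cons_ge]; omega

lemma isBLT_blocks (s m : ℕ) (T : List ℕ) (hT : T.sum = m)
    (A : Matrix (Fin s) (Fin s) (ZMod 2)) (B : Matrix (Fin s) (Fin m) (ZMod 2))
    (C : Matrix (Fin m) (Fin s) (ZMod 2)) (D : Matrix (Fin m) (Fin m) (ZMod 2)) :
    IsBLT (s :: T) (Matrix.reindex finSumFinEquiv finSumFinEquiv (Matrix.fromBlocks A B C D)) ↔
      B = 0 ∧ IsBLT T D := by
  constructor
  · intro h
    constructor
    · ext i j
      have := h (Fin.castAdd m i) (Fin.natAdd s j) (by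
        rw [Fin.val_castAdd, Fin.val_natAdd, blk_cons_lt _ _ _ i.2, blk_cons_ge]
        have := blk_pos T j (hT ▸ j.2)
        omega)
      simpa using this
    · intro i j hij
      have := h (Fin.natAdd s i) (Fin.natAdd s j) (by
        rw [Fin.val_natAdd, Fin.val_natAdd, blk_cons_ge, blk_cons_ge]
        omega)
      simpa using this
  · rintro ⟨rfl, hD⟩ k l
    refine Fin.addCases (fun i => ?_) (fun i => ?_) k <;>
      refine Fin.addCases (fun j => ?_) (fun j => ?_) l <;> intro h
    · rw [Fin.val_castAdd, Fin.val_castAdd, blk_cons_lt _ _ _ i.2, blk_cons_lt _ _ _ j.2] at h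
      omega
    · simp
    · rw [Fin.val_natAdd, Fin.val_castAdd, blk_cons_ge, blk_cons_lt _ _ _ j.2] at h
      omega
    · rw [Fin.val_natAdd, Fin.val_natAdd, blk_cons_ge, blk_cons_ge] at h
      simpa using hD i j (by omega)

lemma isUnit_blocks (s m : ℕ)
    (A : Matrix (Fin s) (Fin s) (ZMod 2))
    (C : Matrix (Fin m) (Fin s) (ZMod 2)) (D : Matrix (Fin m) (Fin m) (ZMod 2)) :
    IsUnit (Matrix.reindex finSumFinEquiv finSumFinEquiv (Matrix.fromBlocks A 0 C D)) ↔
      IsUnit A ∧ IsUnit D := by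
  rw [Matrix.isUnit_iff_isUnit_det, Matrix.det_reindex_self, ← Matrix.isUnit_iff_isUnit_det,
    Matrix.isUnit_fromBlocks_zero₁₂]

lemma card_step (s m : ℕ) (T : List ℕ) (hT : T.sum = m) :
    Nat.card {M : Matrix (Fin (s + m)) (Fin (s + m)) (ZMod 2) // IsBLT (s :: T) M ∧ IsUnit M} =
      Nat.card {A : Matrix (Fin s) (Fin s) (ZMod 2) // IsUnit A} * 2 ^ (m * s) *
        Nat.card {D : Matrix (Fin m) (Fin m) (ZMod 2) // IsBLT T D ∧ IsUnit D} := by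
  have hC : Nat.card (Matrix (Fin m) (Fin s) (ZMod 2)) = 2 ^ (m * s) := by
    simp [Matrix, Nat.card_eq_fintype_card, ← pow_mul, mul_comm]
  rw [← hC, ← Nat.card_prod, ← Nat.card_prod]
  symm
  refine Nat.card_eq_of_bijective (fun x => ⟨Matrix.reindex finSumFinEquiv finSumFinEquiv
    (Matrix.fromBlocks x.1.1.1 0 x.1.2 x.2.1),
    (isBLT_blocks s m T hT _ _ _ _).2 ⟨rfl, x.2.2.1⟩,
    (isUnit_blocks s m _ _ _).2 ⟨x.1.1.2, x.2.2.2⟩⟩) ⟨?_, ?_⟩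
  · rintro ⟨⟨⟨A, hA⟩, C⟩, ⟨D, hD⟩⟩ ⟨⟨⟨A', hA'⟩, C'⟩, ⟨D', hD'⟩⟩ h
    have h := (Matrix.reindex finSumFinEquiv finSumFinEquiv).injective (Subtype.ext_iff.1 h)
    obtain ⟨rfl, -, rfl, rfl⟩ := Matrix.fromBlocks_inj.1 h
    rfl
  · rintro ⟨M, hM, hU⟩
    obtain ⟨N, rfl⟩ := (Matrix.reindex finSumFinEquiv finSumFinEquiv).surjective M
    obtain ⟨A, B, C, D, rfl⟩ : ∃ A B C D, N = Matrix.fromBlocks A B C D :=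
      ⟨_, _, _, _, (Matrix.fromBlocks_toBlocks N).symm⟩
    obtain ⟨rfl, hD⟩ := (isBLT_blocks s m T hT _ _ _ _).1 hM
    obtain ⟨hA, hD'⟩ := (isUnit_blocks s m _ _ _).1 hU
    exact ⟨⟨⟨⟨A, hA⟩, C⟩, ⟨D, hD, hD'⟩⟩, rfl⟩

lemma prod_aux (s : ℕ) : ∏ i : Fin s, (2 ^ s - 2 ^ (i : ℕ)) =
    2 ^ (s.choose 2) * ∏ j ∈ Finset.Icc 2 s, (2 ^ j - 1) := by
  rw [Fin.prod_univ_eq_prod_range (fun i => 2 ^ s - 2 ^ i) s]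
  induction s with
  | zero => simp
  | succ s ih =>
    have h1 : ∀ i ∈ Finset.range s, 2 ^ (s + 1) - 2 ^ (i + 1) = 2 * (2 ^ s - 2 ^ i) := by
      intro i _
      rw [pow_succ, pow_succ, Nat.mul_sub]; ring_nf
    rw [Finset.prod_range_succ', Finset.prod_congr rfl h1, Finset.prod_mul_distrib, ih]
    have h2 : ∏ j ∈ Finset.Icc 2 (s + 1), (2 ^ j - 1) =
        (∏ j ∈ Finset.Icc 2 s, (2 ^ j - 1)) * (2 ^ (s + 1) - 1) := by
      rcases Nat.eq_zero_or_pos s with rfl | hs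
      · simp
      · rw [Finset.prod_Icc_succ_top (by omega)]
    rw [h2, Nat.choose_succ_succ' s 1, Nat.choose_one_right, pow_add]
    simp only [Finset.prod_const, Finset.card_range, pow_zero]
    ring

lemma card_units (s : ℕ) : Nat.card {A : Matrix (Fin s) (Fin s) (ZMod 2) // IsUnit A} =
    2 ^ (s.choose 2) * ∏ j ∈ Finset.Icc 2 s, (2 ^ j - 1) := by
  rw [← prod_aux]
  have h := Matrix.card_GL_field (𝔽 := ZMod 2) s
  rw [ZMod.card] at h
  rw [← h]
  symm
  refine Nat.card_eq_of_bijective (fun u => ⟨u.1, u.isUnit⟩) ⟨?_, ?_⟩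
  · intro u v h
    exact Units.ext (Subtype.ext_iff.1 h)
  · rintro ⟨_, ⟨u, rfl⟩⟩
    exact ⟨u, rfl⟩

lemma card_lin (S : List ℕ) : ∀ n, S.sum = n →
    Nat.card {M : Matrix (Fin n) (Fin n) (ZMod 2) // IsBLT S M ∧ IsUnit M} =
      2 ^ (n.choose 2) * (S.map (fun s => ∏ j ∈ Finset.Icc 2 s, (2 ^ j - 1))).prod := by
  induction S with
  | nil =>
    rintro n rfl
    have : Unique {M : Matrix (Fin 0) (Fin 0) (ZMod 2) // IsBLT [] M ∧ IsUnit M} :=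
      { default := ⟨1, fun k => k.elim0, isUnit_one⟩
        uniq := fun a => Subtype.ext (Subsingleton.elim _ _) }
    change Nat.card {M : Matrix (Fin 0) (Fin 0) (ZMod 2) // IsBLT [] M ∧ IsUnit M} = _
    rw [Nat.card_unique]
    simp
  | cons s T ih =>
    rintro n rfl
    rw [List.sum_cons, card_step s T.sum T rfl, ih _ rfl, card_units, List.map_cons,
      List.prod_cons]
    have : (s + T.sum).choose 2 = s.choose 2 + T.sum * s + T.sum.choose 2 := by
      rw [Nat.add_choose_eq]
      simp [Finset.Nat.antidiagonal_succ]
      ring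
    rw [this, pow_add, pow_add]
    ring

/-- The number of affine transformations `z ↦ Az + b` with `A` an invertible
block-lower-triangular matrix of structure `S` over `𝔽₂` and `b ∈ 𝔽₂ⁿ` is
`2^{n(n+1)/2} · ∏_{i=1}^{t} ∏_{j=2}^{s_i} (2^j − 1)`. -/
theorem card_BLTA (n : ℕ) (hn : 0 < n) (S : List ℕ)
    (hpos : ∀ s ∈ S, 0 < s) (hsum : S.sum = n) :
    Nat.card {Ab : Matrix (Fin n) (Fin n) (ZMod 2) × (Fin n → ZMod 2) //
        IsBLT S Ab.1 ∧ IsUnit Ab.1} =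
      2 ^ (n * (n + 1) / 2) *
        (S.map (fun s => ∏ j ∈ Finset.Icc 2 s, (2 ^ j - 1))).prod := by
  have e : {Ab : Matrix (Fin n) (Fin n) (ZMod 2) × (Fin n → ZMod 2) //
        IsBLT S Ab.1 ∧ IsUnit Ab.1} ≃
      {M : Matrix (Fin n) (Fin n) (ZMod 2) // IsBLT S M ∧ IsUnit M} × (Fin n → ZMod 2) :=
    { toFun := fun x => (⟨x.1.1, x.2⟩, x.1.2)
      invFun := fun y => ⟨(y.1.1, y.2), y.1.2⟩
      left_inv := fun _ => rfl
      right_inv := fun _ => rfl }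
  have h2 : n * (n + 1) / 2 = n.choose 2 + n := by
    have := Nat.choose_two_right (n + 1)
    rw [Nat.choose_succ_succ' n 1, Nat.choose_one_right, Nat.add_sub_cancel] at this
    rw [mul_comm, ← this, add_comm]
  have h3 : Nat.card (Fin n → ZMod 2) = 2 ^ n := by
    simp [Nat.card_eq_fintype_card]
  rw [Nat.card_congr e, Nat.card_prod, card_lin S n hsum, h2, h3, pow_add]
  ring
end

section
/- Let n ≥ 2 and let S = (s₁,…,s_t) be a composition of n with s₁ ≥ 2, and let T = (2,1,…,1) be the composition of n whose first part is 2 and whose remaining n−2 parts all equal 1. Then 3 · |BLTA(S)| = |BLTA(T)| · ∏_{i=1}^{t} ∏_{j=2}^{s_i} (2^j − 1), where |BLTA(S)| denotes the number of pairs (A, b) with A an invertible n×n BLT(S) matrix over 𝔽₂ and b ∈ 𝔽₂ⁿ (and similarly for T). Equivalently, the ratio |BLTA(S)| / |BLTA(T)| — the number of equivalence classes under automorphism SC decoding — equals (1/3) · ∏_{i=1}^{t} ∏_{j=2}^{s_i} (2^j − 1). -/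
theorem blk_cons_aux (s : ℕ) (S : List ℕ) (k : ℕ) :
    blk (s :: S) k = 1 + if k < s then 0 else blk S (k - s) := by
  unfold blk
  rw [List.length_cons, List.range_succ_eq_map, List.filter_cons]
  simp only [List.take_zero, List.sum_nil, Nat.zero_le, decide_true, if_true, List.length_cons,
    List.filter_map, List.length_map]
  rw [add_comm]
  congr 1
  split_ifs with h
  · rw [List.length_eq_zero_iff, List.filter_eq_nil_iff]
    intro a _
    intro h'
    have h2 := of_decide_eq_true h'
    simp only [Nat.succ_eq_add_one, List.take_succ_cons, List.sum_cons] at h2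
    omega
  · congr 1
    apply List.filter_congr
    intro a _
    refine decide_eq_decide.mpr ?_
    simp only [Nat.succ_eq_add_one, List.take_succ_cons, List.sum_cons]
    omega

theorem blk_pos_aux (S : List ℕ) (h : S ≠ []) (k : ℕ) : 0 < blk S k := by
  cases S with
  | nil => exact absurd rfl h
  | cons s S => rw [blk_cons_aux]; omega

theorem isBLT_cons_aux (s m : ℕ) (S : List ℕ) (hS : S.sum = m)
    (a : Matrix (Fin s) (Fin s) (ZMod 2)) (b : Matrix (Fin s) (Fin m) (ZMod 2))
    (c : Matrix (Fin m) (Fin s) (ZMod 2)) (d : Matrix (Fin m) (Fin m) (ZMod 2)) :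
    IsBLT (s :: S) (Matrix.reindex finSumFinEquiv finSumFinEquiv (Matrix.fromBlocks a b c d)) ↔
      b = 0 ∧ IsBLT S d := by
  unfold IsBLT
  rw [finSumFinEquiv.symm.forall_congr_left]
  simp only [finSumFinEquiv.symm.forall_congr_left, Sum.forall]
  simp only [Equiv.symm_symm, Matrix.reindex_apply, Matrix.submatrix_apply,
    finSumFinEquiv_symm_apply_castAdd, finSumFinEquiv_symm_apply_natAdd,
    finSumFinEquiv_apply_left, finSumFinEquiv_apply_right,
    blk_cons_aux, Fin.val_castAdd, Fin.val_natAdd, Fin.is_lt, if_true,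
    Matrix.fromBlocks_apply₁₁, Matrix.fromBlocks_apply₁₂, Matrix.fromBlocks_apply₂₁,
    Matrix.fromBlocks_apply₂₂, Nat.not_lt.mpr (Nat.le_add_right s _), if_false,
    Nat.add_sub_cancel_left]
  constructor
  · rintro ⟨h1, h2⟩
    refine ⟨?_, fun k l h => (h2 k).2 l (by omega)⟩
    ext i j
    refine (h1 i).2 j ?_
    have : 0 < blk S j := by
      apply blk_pos_aux
      rintro rfl
      simp at hS
      subst hS
      exact j.elim0
    omega
  · rintro ⟨rfl, h⟩
    exact ⟨fun i => ⟨fun _ h => by omega, fun _ _ => rfl⟩,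
      fun i => ⟨fun _ h => by omega, fun l hl => h i l (by omega)⟩⟩

theorem card_GL_two_aux (s : ℕ) :
    Nat.card (GL (Fin s) (ZMod 2)) = 2 ^ (s.choose 2) * ∏ j ∈ Finset.Icc 2 s, (2 ^ j - 1) := by
  rw [Matrix.card_GL_field, ZMod.card]
  have h1 : ∏ j ∈ Finset.Icc 2 s, (2 ^ j - 1) = ∏ j ∈ Finset.range s, (2 ^ (j + 1) - 1) := by
    induction s with
    | zero => simp
    | succ s ih =>
      rw [Finset.prod_range_succ, ← ih]
      rcases s with _ | s
      · simp
      · rw [Finset.prod_Icc_succ_top (by omega)]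
  rw [h1, Fin.prod_univ_eq_prod_range (fun i => 2 ^ s - 2 ^ i) s, Nat.choose_two_right, ← Finset.sum_range_id,
    ← Finset.prod_pow_eq_pow_sum, ← Finset.prod_range_reflect (fun j => 2 ^ (j + 1) - 1),
    ← Finset.prod_mul_distrib]
  apply Finset.prod_congr rfl
  intro i hi
  have hi := Finset.mem_range.mp hi
  rw [Nat.mul_sub, ← pow_add, mul_one]
  congr 2
  omega

theorem card_BLT_aux (S : List ℕ) : ∀ n : ℕ, S.sum = n →
    Nat.card {A : Matrix (Fin n) (Fin n) (ZMod 2) // IsBLT S A ∧ IsUnit A} =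
      2 ^ (n.choose 2) * (S.map (fun s => ∏ j ∈ Finset.Icc 2 s, (2 ^ j - 1))).prod := by
  induction S with
  | nil =>
    intro n hn
    obtain rfl : n = 0 := by simpa using hn.symm
    have : Unique {A : Matrix (Fin 0) (Fin 0) (ZMod 2) // IsBLT [] A ∧ IsUnit A} :=
      { default := ⟨1, fun k => k.elim0, isUnit_one⟩
        uniq := fun a => Subtype.ext (Subsingleton.elim _ _) }
    rw [Nat.card_unique]
    simp
  | cons s S ih =>
    intro n hn
    obtain ⟨m, hm⟩ : ∃ m, S.sum = m := ⟨_, rfl⟩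
    obtain rfl : n = s + m := by simp at hn; omega
    let f : GL (Fin s) (ZMod 2) × Matrix (Fin m) (Fin s) (ZMod 2) ×
        {A : Matrix (Fin m) (Fin m) (ZMod 2) // IsBLT S A ∧ IsUnit A} →
        {A : Matrix (Fin (s + m)) (Fin (s + m)) (ZMod 2) // IsBLT (s :: S) A ∧ IsUnit A} :=
      fun x => ⟨Matrix.reindex finSumFinEquiv finSumFinEquiv
        (Matrix.fromBlocks x.1.1 0 x.2.1 x.2.2.1),
        (isBLT_cons_aux s m S hm _ _ _ _).2 ⟨rfl, x.2.2.2.1⟩, by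
          rw [Matrix.reindex_apply, Matrix.isUnit_submatrix_equiv,
            Matrix.isUnit_fromBlocks_zero₁₂]
          exact ⟨x.1.isUnit, x.2.2.2.2⟩⟩
    have hf : Function.Bijective f := by
      constructor
      · rintro ⟨g, c, d, hd⟩ ⟨g', c', d', hd'⟩ h
        have h := (Matrix.reindex finSumFinEquiv finSumFinEquiv).injective (Subtype.ext_iff.mp h)
        obtain ⟨h1, -, h2, h3⟩ := Matrix.fromBlocks_inj.mp h
        have h1 := Units.ext h1
        simp only at h1 h2 h3
        subst h1 h2 h3
        rfl
      · rintro ⟨A, hA, hu⟩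
        obtain ⟨B, rfl⟩ := (Matrix.reindex finSumFinEquiv finSumFinEquiv).surjective A
        rw [← Matrix.fromBlocks_toBlocks B] at hA hu
        obtain ⟨h0, hd⟩ := (isBLT_cons_aux s m S hm _ _ _ _).1 hA
        rw [h0, Matrix.reindex_apply, Matrix.isUnit_submatrix_equiv,
            Matrix.isUnit_fromBlocks_zero₁₂] at hu
        refine ⟨⟨hu.1.unit, B.toBlocks₂₁, B.toBlocks₂₂, hd, hu.2⟩, Subtype.ext ?_⟩
        simp only [f, IsUnit.unit_spec]
        rw [← h0, Matrix.fromBlocks_toBlocks]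
    rw [← Nat.card_congr (Equiv.ofBijective f hf), Nat.card_prod, Nat.card_prod, ih m hm,
      card_GL_two_aux]
    have hc : Nat.card (Matrix (Fin m) (Fin s) (ZMod 2)) = 2 ^ (s * m) := by
      unfold Matrix
      rw [Nat.card_fun, Nat.card_fun]
      simp [← pow_mul]
    have hch : (s + m).choose 2 = s.choose 2 + s * m + m.choose 2 := by
      have := Nat.add_choose_eq s m 2
      rw [this]
      simp [Finset.Nat.antidiagonal_succ]
      ring
    rw [hc, hch, List.map_cons, List.prod_cons, pow_add, pow_add]
    ring

theorem card_BLTA_aux (S : List ℕ) (n : ℕ) (h : S.sum = n) :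
    Nat.card {Ab : Matrix (Fin n) (Fin n) (ZMod 2) × (Fin n → ZMod 2) //
          IsBLT S Ab.1 ∧ IsUnit Ab.1} =
      2 ^ (n.choose 2) * (S.map (fun s => ∏ j ∈ Finset.Icc 2 s, (2 ^ j - 1))).prod * 2 ^ n := by
  let e : {Ab : Matrix (Fin n) (Fin n) (ZMod 2) × (Fin n → ZMod 2) //
          IsBLT S Ab.1 ∧ IsUnit Ab.1} ≃
      {A : Matrix (Fin n) (Fin n) (ZMod 2) // IsBLT S A ∧ IsUnit A} × (Fin n → ZMod 2) :=
    { toFun := fun x => (⟨x.1.1, x.2⟩, x.1.2)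
      invFun := fun x => ⟨(x.1.1, x.2), x.1.2⟩
      left_inv := fun _ => rfl
      right_inv := fun _ => rfl }
  rw [Nat.card_congr e, Nat.card_prod, card_BLT_aux S n h]
  congr 1
  rw [Nat.card_eq_fintype_card]
  simp


/-- For a composition `S` of `n` with `s₁ ≥ 2`, and `T = (2,1,…,1)`,
`3 · |BLTA(S)| = |BLTA(T)| · ∏_{i=1}^{t} ∏_{j=2}^{s_i} (2^j − 1)`, i.e. the number
of equivalence classes `|BLTA(S)|/|BLTA(T)|` equals `(1/3) ∏ᵢ ∏_{j=2}^{s_i} (2^j−1)`. -/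
theorem card_equivalence_classes_SC (n : ℕ) (hn : 2 ≤ n) (S : List ℕ)
    (hpos : ∀ s ∈ S, 0 < s) (hsum : S.sum = n) (hhead : 2 ≤ S.headI) :
    3 * Nat.card {Ab : Matrix (Fin n) (Fin n) (ZMod 2) × (Fin n → ZMod 2) //
          IsBLT S Ab.1 ∧ IsUnit Ab.1} =
      Nat.card {Ab : Matrix (Fin n) (Fin n) (ZMod 2) × (Fin n → ZMod 2) //
          IsBLT (2 :: List.replicate (n - 2) 1) Ab.1 ∧ IsUnit Ab.1} *
        (S.map (fun s => ∏ j ∈ Finset.Icc 2 s, (2 ^ j - 1))).prod := by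
  rw [card_BLTA_aux S n hsum, card_BLTA_aux (2 :: List.replicate (n - 2) 1) n (by simp; omega)]
  simp
  ring
end

section
/- Let n be a positive integer and let S = (s₁,…,s_t) be a composition of n. For every invertible n×n matrix A over 𝔽₂ that is block-lower-triangular with structure S, there exist a permutation matrix P that is BLT(S), an invertible upper-triangular matrix U that is BLT(S), and an invertible lower-triangular matrix L over 𝔽₂, such that A = P · U · L. (Consequently, each equivalence class under automorphism SC decoding contains at least one automorphism of the form P·U.) -/
/-- `P` is a permutation matrix: a 0–1 matrix with `P i j = 1` iff `i = σ j`
for some permutation `σ`. -/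
def IsPermMatrix {n : ℕ} (P : Matrix (Fin n) (Fin n) (ZMod 2)) : Prop :=
  ∃ σ : Equiv.Perm (Fin n), ∀ i j : Fin n, P i j = if i = σ j then 1 else 0

open Fin in
lemma PUL_core : ∀ (n : ℕ) (b : Fin n → ℕ) (_ : Monotone b) (A : Fin n → Fin n → ZMod 2)
    (_ : ∀ i j, b i < b j → A i j = 0)
    (_ : ∀ v : Fin n → ZMod 2, (∀ i, ∑ j, A i j * v j = 0) → ∀ j, v j = 0),
    ∃ (σ : Fin n → Fin n) (U L : Fin n → Fin n → ZMod 2),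
      Function.Injective σ ∧ (∀ i, b (σ i) = b i) ∧
      (∀ i j, j < i → U i j = 0) ∧ (∀ i, U i i = 1) ∧ (∀ i j, b i < b j → U i j = 0) ∧
      (∀ i j, i < j → L i j = 0) ∧ (∀ i, L i i = 1) ∧
      ∀ i j, A (σ i) j = ∑ k, U i k * L k j := by
  intro n
  induction n with
  | zero =>
    intro b _ A _ _
    exact ⟨id, A, A, fun i => i.elim0, fun i => i.elim0, fun i => i.elim0, fun i => i.elim0,
      fun i => i.elim0, fun i => i.elim0, fun i => i.elim0, fun i => i.elim0⟩
  | succ n ih =>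
    intro b hb A hA hinj
    obtain ⟨r, hr⟩ : ∃ r, A r (last n) ≠ 0 := by
      by_contra! h
      have := hinj (Pi.single (last n) 1) (fun i => by simp [Pi.single_apply, h]) (last n)
      simp at this
    have hr1 : A r (last n) = 1 := by
      generalize A r (last n) = x at hr
      revert x; decide
    have hbr : b r = b (last n) := by
      refine le_antisymm (hb (le_last r)) ?_
      by_contra h
      exact hr (hA _ _ (not_le.mp h))
    obtain ⟨τ, hτ⟩ : ∃ τ : Equiv.Perm (Fin (n+1)), τ = Equiv.swap r (last n) := ⟨_, rfl⟩
    have hτl : τ (last n) = r := by rw [hτ, Equiv.swap_apply_right]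
    have hbτ : ∀ i, b (τ i) = b i := by
      intro i
      rw [hτ, Equiv.swap_apply_def]
      split_ifs with h1 h2
      · rw [h1, hbr]
      · rw [h2, hbr]
      · rfl
    obtain ⟨σ, U, L, hσ, hbσ, hU, hU1, hUb, hL, hL1, hdec⟩ := ih (fun i => b (castSucc i))
      (fun i j h => hb (by simpa using h))
      (fun i j => A (τ (castSucc i)) (castSucc j)
        - A (τ (castSucc i)) (last n) * A r (castSucc j))
      (by
        intro i j hij
        have h1 : A (τ (castSucc i)) (castSucc j) = 0 := hA _ _ (by rw [hbτ]; exact hij)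
        have h2 : A (τ (castSucc i)) (last n) = 0 :=
          hA _ _ (by rw [hbτ]; exact lt_of_lt_of_le hij (hb (le_last _)))
        simp [h1, h2])
      (by
        intro v hv
        have key := hinj (fun i => Fin.lastCases (motive := fun _ => ZMod 2)
          (- ∑ j, A r (castSucc j) * v j) v i) (by
            intro i
            obtain ⟨k, rfl⟩ := τ.surjective i
            rw [Fin.sum_univ_castSucc]
            simp only [Fin.lastCases_last, Fin.lastCases_castSucc]
            induction k using Fin.lastCases with
            | last => rw [hτl, hr1]; ring
            | cast k =>
              rw [← hv k]
              simp only [sub_mul, Finset.sum_sub_distrib, mul_assoc, ← Finset.mul_sum]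
              ring)
        intro j
        simpa using key (castSucc j))
    refine ⟨fun i => τ (Fin.lastCases (motive := fun _ => Fin (n+1)) (last n)
        (fun i => castSucc (σ i)) i),
      fun i j => Fin.lastCases (motive := fun _ => ZMod 2)
        (Fin.lastCases (motive := fun _ => ZMod 2) 1 (fun _ => 0) j)
        (fun i => Fin.lastCases (motive := fun _ => ZMod 2)
          (A (τ (castSucc (σ i))) (last n)) (U i) j) i,
      fun i j => Fin.lastCases (motive := fun _ => ZMod 2)
        (A r j)
        (fun i => Fin.lastCases (motive := fun _ => ZMod 2) 0 (L i) j) i,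
      ?_, ?_, ?_, ?_, ?_, ?_, ?_, ?_⟩
    · refine τ.injective.comp ?_
      intro i j h
      induction i using Fin.lastCases <;> induction j using Fin.lastCases
      · rfl
      · simp only [Fin.lastCases_last, Fin.lastCases_castSucc] at h
        exact absurd h.symm (castSucc_lt_last _).ne
      · simp only [Fin.lastCases_last, Fin.lastCases_castSucc] at h
        exact absurd h (castSucc_lt_last _).ne
      · simp only [Fin.lastCases_castSucc] at h
        rw [hσ (castSucc_injective _ h)]
    · intro i
      rw [hbτ]
      induction i using Fin.lastCases with
      | last => simp
      | cast i => simpa using hbσ i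
    · intro i j h
      induction i using Fin.lastCases <;> induction j using Fin.lastCases
      · exact absurd h (lt_irrefl _)
      · simp
      · exact absurd h (not_lt.mpr (le_last _))
      · simpa using hU _ _ (by simpa using h)
    · intro i
      induction i using Fin.lastCases with
      | last => simp
      | cast i => simpa using hU1 i
    · intro i j h
      induction i using Fin.lastCases <;> induction j using Fin.lastCases
      · exact absurd h (lt_irrefl _)
      · simp
      · simp only [Fin.lastCases_last, Fin.lastCases_castSucc]
        refine hA _ _ ?_
        rw [hbτ, hbσ]
        exact h
      · simpa using hUb _ _ h
    · intro i j h
      induction i using Fin.lastCases <;> induction j using Fin.lastCases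
      · exact absurd h (lt_irrefl _)
      · exact absurd h (not_lt.mpr (le_last _))
      · simp
      · simpa using hL _ _ (by simpa using h)
    · intro i
      induction i using Fin.lastCases with
      | last => simpa using hr1
      | cast i => simpa using hL1 i
    · intro i j
      rw [Fin.sum_univ_castSucc]
      induction i using Fin.lastCases <;> induction j using Fin.lastCases
      · simp [hτl]
      · simp [hτl]
      · simp [hr1]
      · simp only [Fin.lastCases_last, Fin.lastCases_castSucc]
        rw [← hdec]
        ring

lemma blk_mono (S : List ℕ) : Monotone (blk S) := by
  intro a c h
  unfold blk
  refine List.Sublist.length_le (List.monotone_filter_right _ ?_)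
  intro i hi
  simp only [decide_eq_true_eq] at hi ⊢
  exact hi.trans h

/-- Every invertible BLT(S) matrix `A` over `𝔽₂` decomposes as `A = P·U·L` with
`P` a BLT(S) permutation matrix, `U` an invertible upper-triangular BLT(S) matrix,
and `L` an invertible lower-triangular matrix. -/
theorem PUL_decomposition_BLT (n : ℕ) (hn : 0 < n) (S : List ℕ)
    (hpos : ∀ s ∈ S, 0 < s) (hsum : S.sum = n)
    (A : Matrix (Fin n) (Fin n) (ZMod 2)) (hA : IsBLT S A) (hinv : IsUnit A) :
    ∃ P U L : Matrix (Fin n) (Fin n) (ZMod 2),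
      IsPermMatrix P ∧ IsBLT S P ∧
      (∀ i j : Fin n, (j : ℕ) < (i : ℕ) → U i j = 0) ∧ IsBLT S U ∧ IsUnit U ∧
      (∀ i j : Fin n, (i : ℕ) < (j : ℕ) → L i j = 0) ∧ IsUnit L ∧
      A = P * U * L := by
  classical
  have hdet : IsUnit A.det := (Matrix.isUnit_iff_isUnit_det A).mp hinv
  obtain ⟨σ, U, L, hσ, hbσ, hU, hU1, hUb, hL, hL1, hdec⟩ := PUL_core n (fun i => blk S i)
    (fun i j h => blk_mono S h) A hA (by
      intro v hv j
      have h0 : A.mulVec v = 0 := by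
        funext i
        exact hv i
      have : v = 0 := by
        have h2 := congrArg (A⁻¹).mulVec h0
        rwa [Matrix.mulVec_mulVec, Matrix.nonsing_inv_mul _ hdet, Matrix.one_mulVec,
          Matrix.mulVec_zero] at h2
      rw [this]; rfl)
  obtain ⟨e, he⟩ : ∃ e : Equiv.Perm (Fin n), ∀ i, e i = σ i :=
    ⟨Equiv.ofBijective σ (Finite.injective_iff_bijective.mp hσ), fun _ => rfl⟩
  refine ⟨Matrix.of fun i j => if i = e j then 1 else 0, Matrix.of U, Matrix.of L,
    ⟨e, fun _ _ => rfl⟩, ?_, hU, hUb, ?_, hL, ?_, ?_⟩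
  · intro k l h
    simp only [Matrix.of_apply]
    rw [if_neg]
    rintro rfl
    rw [he] at h
    exact absurd (hbσ l) h.ne
  · rw [Matrix.isUnit_iff_isUnit_det,
      Matrix.det_of_upperTriangular (M := Matrix.of U) (fun i j h => hU i j h)]
    simp [hU1]
  · rw [Matrix.isUnit_iff_isUnit_det,
      Matrix.det_of_lowerTriangular (Matrix.of L) (fun i j h => hL i j h)]
    simp [hL1]
  · ext i j
    obtain ⟨k, rfl⟩ := e.surjective i
    rw [Matrix.mul_assoc, Matrix.mul_apply]
    simp only [Matrix.of_apply, e.injective.eq_iff, ite_mul, one_mul, zero_mul,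
      Finset.sum_ite_eq, Finset.mem_univ, if_true]
    rw [he, hdec, Matrix.mul_apply]
    rfl
end

section
/- Every invertible n×n matrix A over 𝔽₂ admits a PUL decomposition: there exist a permutation matrix P, an invertible upper-triangular matrix U, and an invertible lower-triangular matrix L over 𝔽₂ such that A = P · U · L. -/
theorem PUL_aux : ∀ (n : ℕ) (A : Matrix (Fin n) (Fin n) (ZMod 2)), A.det ≠ 0 →
    ∃ (σ : Fin n → Fin n) (U L : Matrix (Fin n) (Fin n) (ZMod 2)),
      Function.Injective σ ∧
      (∀ i j : Fin n, (j : ℕ) < (i : ℕ) → U i j = 0) ∧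
      (∀ i j : Fin n, (i : ℕ) < (j : ℕ) → L i j = 0) ∧
      ∀ i j, A (σ i) j = ∑ k, U i k * L k j := by
  intro n
  induction n with
  | zero =>
    intro A _
    exact ⟨id, 0, 0, fun _ _ h => h, fun i => i.elim0, fun i => i.elim0, fun i => i.elim0⟩
  | succ m ih =>
    intro A hA
    obtain ⟨r, hr⟩ : ∃ r, A r (Fin.last m) ≠ 0 := by
      by_contra! h
      exact hA (Matrix.det_eq_zero_of_column_eq_zero (Fin.last m) h)
    have hr1 : A r (Fin.last m) = 1 := by
      have : ∀ x : ZMod 2, x ≠ 0 → x = 1 := by decide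
      exact this _ hr
    set s : Equiv.Perm (Fin (m + 1)) := Equiv.swap r (Fin.last m) with hs
    have hsl : s (Fin.last m) = r := Equiv.swap_apply_right _ _
    let S : Matrix (Fin m) (Fin m) (ZMod 2) := fun i j =>
      A (s i.castSucc) j.castSucc - A (s i.castSucc) (Fin.last m) * A r j.castSucc
    have hS : S.det ≠ 0 := by
      intro h0
      obtain ⟨v, hv0, hv⟩ := Matrix.exists_mulVec_eq_zero_iff.mpr h0
      apply hA
      apply Matrix.exists_mulVec_eq_zero_iff.mp
      refine ⟨Fin.snoc (α := fun _ => ZMod 2) v (-∑ j, A r (Fin.castSucc j) * v j), ?_, ?_⟩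
      · intro h
        apply hv0
        funext i
        have := congrFun h i.castSucc
        simpa using this
      · funext i
        obtain ⟨i, rfl⟩ := s.surjective i
        refine Fin.lastCases ?_ (fun i => ?_) i
        · rw [hsl]
          simp [Matrix.mulVec, dotProduct, Fin.sum_univ_castSucc, hr1, CharTwo.add_self_eq_zero]
        · have := congrFun hv i
          simp only [Matrix.mulVec, dotProduct, S, sub_mul, Finset.sum_sub_distrib, mul_assoc,
            ← Finset.mul_sum, Pi.zero_apply] at this
          simp only [Matrix.mulVec, dotProduct, Fin.sum_univ_castSucc, Fin.snoc_castSucc,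
            Fin.snoc_last, Pi.zero_apply]
          rw [← this]
          ring
    obtain ⟨τ, U, L, hτ, hU, hL, h⟩ := ih S hS
    let t : Fin (m + 1) → Fin (m + 1) :=
      Fin.snoc (α := fun _ => Fin (m + 1)) (fun i => (τ i).castSucc) (Fin.last m)
    have ht : Function.Injective t := by
      intro a b
      refine Fin.lastCases ?_ (fun a => ?_) a <;> refine Fin.lastCases ?_ (fun b => ?_) b
      · simp
      · simp [t, (Fin.castSucc_ne_last _).symm]
      · simp [t, Fin.castSucc_ne_last]
      · simpa [t] using fun h => hτ h
    refine ⟨fun i => s (t i),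
      Fin.snoc (α := fun _ => Fin (m + 1) → ZMod 2)
        (fun i => Fin.snoc (α := fun _ => ZMod 2) (U i) (A (s (τ i).castSucc) (Fin.last m)))
        (Fin.snoc (α := fun _ => ZMod 2) 0 1),
      Fin.snoc (α := fun _ => Fin (m + 1) → ZMod 2)
        (fun i => Fin.snoc (α := fun _ => ZMod 2) (L i) 0)
        (Fin.snoc (α := fun _ => ZMod 2) (fun j => A r j.castSucc) 1),
      s.injective.comp ht, ?_, ?_, ?_⟩
    · intro i j
      refine Fin.lastCases ?_ (fun i => ?_) i <;> refine Fin.lastCases ?_ (fun j => ?_) j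
      · simp
      · simp
      · intro h
        have := i.isLt
        simp at h
        omega
      · simpa using hU i j
    · intro i j
      refine Fin.lastCases ?_ (fun i => ?_) i <;> refine Fin.lastCases ?_ (fun j => ?_) j
      · simp
      · intro h
        have := j.isLt
        simp at h
        omega
      · simp
      · simpa using hL i j
    · intro i j
      refine Fin.lastCases ?_ (fun i => ?_) i <;> refine Fin.lastCases ?_ (fun j => ?_) j
      · simp [t, Fin.sum_univ_castSucc, hsl, hr1]
      · simp [t, Fin.sum_univ_castSucc, hsl]
      · simp [t, Fin.sum_univ_castSucc]
      · have := h i j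
        simp only [S] at this
        simp [t, Fin.sum_univ_castSucc, ← this]

/-- Every invertible `n×n` matrix over `𝔽₂` admits a PUL decomposition
`A = P·U·L` with `P` a permutation matrix, `U` invertible upper-triangular,
`L` invertible lower-triangular. -/
theorem PUL_decomposition (n : ℕ) (A : Matrix (Fin n) (Fin n) (ZMod 2))
    (hinv : IsUnit A) :
    ∃ P U L : Matrix (Fin n) (Fin n) (ZMod 2),
      IsPermMatrix P ∧
      (∀ i j : Fin n, (j : ℕ) < (i : ℕ) → U i j = 0) ∧ IsUnit U ∧
      (∀ i j : Fin n, (i : ℕ) < (j : ℕ) → L i j = 0) ∧ IsUnit L ∧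
      A = P * U * L := by
  have hdet : IsUnit A.det := (Matrix.isUnit_iff_isUnit_det A).mp hinv
  obtain ⟨σ, U, L, hσ, hU, hL, h⟩ := PUL_aux n A hdet.ne_zero
  let e : Equiv.Perm (Fin n) := Equiv.ofBijective σ (Finite.injective_iff_bijective.mp hσ)
  have key : A = (Matrix.of fun i j => if i = e j then (1 : ZMod 2) else 0) * U * L := by
    ext i j
    obtain ⟨i, rfl⟩ := e.surjective i
    rw [Matrix.mul_assoc, Matrix.mul_apply]
    simp only [Matrix.of_apply, e.injective.eq_iff, ite_mul, one_mul, zero_mul,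
      Finset.sum_ite_eq, Finset.mem_univ, if_true]
    exact h i j
  have hd := hdet
  rw [key, Matrix.det_mul, Matrix.det_mul] at hd
  refine ⟨_, U, L, ⟨e, fun i j => rfl⟩, hU, ?_, hL, ?_, key⟩
  · exact (Matrix.isUnit_iff_isUnit_det U).mpr
      (isUnit_of_mul_isUnit_right (isUnit_of_mul_isUnit_left hd))
  · exact (Matrix.isUnit_iff_isUnit_det L).mpr (isUnit_of_mul_isUnit_right hd)
end
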